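/- arXiv:1812.11370 — 2 statements merged into one kernel-verified Lean document; each statement's English description precedes it below -/
import Mathlib

section
/- Let a ∈ ℤ, let n be a positive integer and n-1 < α < n, let λ be a real number with |λ| < 1, and let b₀, …, b_{n-1} ∈ ℝ. Define y(k) = ∑_{κ=0}^{n-1} b_κ · F_{α,κ+1}(λ,k,a) for k ≥ a+1, and y(k) = ∑_{κ=0}^{n-1} b_κ · ∏_{i=0}^{κ-1}(k-a+i)/κ! for k ≤ a (empty product equal to 1). Then y satisfies the initial conditions ∇^κ y(a) = b_κ for κ = 0, 1, …, n-1, and the zero-input nabla fractional difference equation ₐ∇ₖ^α y(k) = λ·y(k) for every k ∈ ℕ_{a+1}. -/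
/-- The rising function `p^{q̄} = Γ(p+q)/Γ(p)`. -/
noncomputable def rise (p : ℤ) (q : ℝ) : ℝ :=
  Real.Gamma ((p : ℝ) + q) / Real.Gamma (p : ℝ)

/-- The discrete Mittag–Leffler function
`F_{α,β}(λ,k,a) = ∑_{j=0}^∞ λ^j (k-a)^{\overline{jα+β-1}}/Γ(jα+β)`. -/
noncomputable def discML (α β lam : ℝ) (k a : ℤ) : ℝ :=
  ∑' j : ℕ, lam ^ j * rise (k - a) ((j : ℝ) * α + β - 1) / Real.Gamma ((j : ℝ) * α + β)

/-- The `n`-th backward difference `∇ⁿ f(k) = ∑_{j=0}^n (-1)^j C(n,j) f(k-j)`. -/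
noncomputable def bdiff (n : ℕ) (f : ℤ → ℝ) (k : ℤ) : ℝ :=
  ∑ j ∈ Finset.range (n + 1), (-1 : ℝ) ^ j * (n.choose j : ℝ) * f (k - j)

/-- The `γ`-th nabla fractional sum
`ₐ∇ₖ^{-γ} f(k) = ∑_{j=0}^{k-a-1} (Γ(j+γ)/(Γ(γ)Γ(j+1))) f(k-j)`. -/
noncomputable def nsum (a : ℤ) (γ : ℝ) (f : ℤ → ℝ) (k : ℤ) : ℝ :=
  ∑ j ∈ Finset.range (k - a).toNat,
    (Real.Gamma ((j : ℝ) + γ) / (Real.Gamma γ * Real.Gamma ((j : ℝ) + 1))) * f (k - j)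

/-- The nabla Caputo fractional difference
`ₐ∇ₖ^α f(k) = ₐ∇ₖ^{-(n-α)}(∇ⁿ f)(k)` for `n-1 < α < n`. -/
noncomputable def caputo (a : ℤ) (α : ℝ) (n : ℕ) (f : ℤ → ℝ) (k : ℤ) : ℝ :=
  nsum a ((n : ℝ) - α) (bdiff n f) k

/-!
Encode a function `f` on `ℕ_{a+1}` by the power series `∑_l f(a + l + 1) x^l`. Then the `γ`-th nabla
sum is multiplication by `(1 - x)^{-γ}`, and on functions vanishing up to `a` the difference `∇ⁿ` is
multiplication by `(1 - x)^n`.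

Let `p` be the polynomial that gives `y` on `k ≤ a`. It has degree less than `n`, so `∇ⁿ p = 0`, and
`y - p` vanishes up to `a`. The Caputo difference of `y` is therefore encoded by
`(1 - x)^{α - n} (1 - x)^n (y - p) = (1 - x)^α (y - p)`, and the equation with right-hand side `λ y`
becomes `(1 - λ (1 - x)^{-α}) y = p`. Summing a geometric series, `F_{α,κ+1}` is encoded by
`(1 - x)^{-(κ+1)} / (1 - λ (1 - x)^{-α})`, while `(1 - x)^{-(κ+1)}` encodes the degree-`κ` term
of `p`.
-/

open PowerSeries Finset

lemma one_sub_pow_eq_sum {R A : Type*} [CommRing R] [CommRing A] [Algebra R A] (t : A) (n : ℕ) :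
    (1 - t) ^ n = ∑ j ∈ range (n + 1), ((-1) ^ j * (n.choose j : R)) • t ^ j := by
  rw [sub_eq_neg_add, add_pow]
  refine sum_congr rfl fun j _ ↦ ?_
  rw [neg_pow, one_pow, mul_one, Algebra.smul_def, map_mul, map_pow, map_neg, map_one, map_natCast]
  ring

section Multichoose

variable {R : Type*}

lemma multichoose_eq_prod_div_factorial [Field R] [CharZero R] [BinomialRing R] (r : R) (i : ℕ) :
    Ring.multichoose r i = (∏ t ∈ range i, (r + t)) / i.factorial := by
  have eval_ascPochhammer : (ascPochhammer R i).eval r = ∏ t ∈ range i, (r + t) := by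
    induction i with
    | zero => simp
    | succ i ih => rw [prod_range_succ, ascPochhammer_succ_eval, ih]
  rw [eq_div_iff (Nat.cast_ne_zero.2 i.factorial_ne_zero), mul_comm, ← nsmul_eq_mul,
    Ring.factorial_nsmul_multichoose_eq_ascPochhammer, Polynomial.ascPochhammer_smeval_eq_eval,
    eval_ascPochhammer]

lemma multichoose_eq_Gamma_div {r : ℝ} (hr : 0 < r) (i : ℕ) :
    Ring.multichoose r i = Real.Gamma (i + r) / (Real.Gamma r * Real.Gamma (i + 1)) := by
  have Gamma_add : Real.Gamma (i + r) = Real.Gamma r * ∏ t ∈ range i, (r + (t : ℝ)) := by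
    induction i with
    | zero => simp
    | succ i ih =>
      rw [prod_range_succ, Nat.cast_succ, add_right_comm, Real.Gamma_add_one (by positivity), ih]
      ring
  rw [Gamma_add, Real.Gamma_nat_eq_factorial, multichoose_eq_prod_div_factorial,
    mul_div_mul_left _ _ (Real.Gamma_pos_of_pos hr).ne']

variable [CommRing R] [BinomialRing R]

lemma multichoose_natCast_add_one_comm (l κ : ℕ) :
    Ring.multichoose ((l : R) + 1) κ = Ring.multichoose ((κ : R) + 1) l := by
  have eq_choose (m i : ℕ) : Ring.multichoose ((m : R) + 1) i = ((m + i).choose i : R) := by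
    rw [Ring.multichoose_eq, add_right_comm, add_sub_cancel_right, ← Nat.cast_add,
      Ring.choose_natCast]
  rw [eq_choose, eq_choose, add_comm l, Nat.choose_symm_add]

/-- The power series of `(1 - X) ^ (-r)`. -/
noncomputable def negBinomialSeries (r : R) : R⟦X⟧ :=
  rescale (-1) (binomialSeries R (-r))

lemma coeff_negBinomialSeries (r : R) (i : ℕ) :
    coeff i (negBinomialSeries r) = Ring.multichoose r i := by
  rw [negBinomialSeries, coeff_rescale, binomialSeries_coeff, Ring.choose_neg',
    Units.smul_def, zsmul_eq_mul, Int.cast_negOnePow_natCast, smul_eq_mul, mul_one, ← mul_assoc,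
    ← mul_pow, neg_mul_neg, one_mul, one_pow, one_mul]

lemma negBinomialSeries_zero : negBinomialSeries (0 : R) = 1 := by
  rw [negBinomialSeries, neg_zero, binomialSeries_zero, map_one]

lemma negBinomialSeries_add (r s : R) :
    negBinomialSeries (r + s) = negBinomialSeries r * negBinomialSeries s := by
  simp only [negBinomialSeries, neg_add, binomialSeries_add, map_mul]

lemma negBinomialSeries_neg_natCast (n : ℕ) : negBinomialSeries (-n : R) = (1 - X) ^ n := by
  rw [negBinomialSeries, neg_neg, binomialSeries_nat, map_pow, map_add, map_one, rescale_X,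
    map_neg, map_one, neg_one_mul, sub_eq_add_neg]

lemma negBinomialSeries_natCast_mul (j : ℕ) (r : R) :
    negBinomialSeries (j * r) = negBinomialSeries r ^ j := by
  induction j with
  | zero => rw [Nat.cast_zero, zero_mul, negBinomialSeries_zero, pow_zero]
  | succ j ih => rw [Nat.cast_succ, add_one_mul, negBinomialSeries_add, ih, pow_succ]

lemma coeff_C_mul_negBinomialSeries_pow_mul (α β lam : R) (j l : ℕ) :
    coeff l ((C lam * negBinomialSeries α) ^ j * negBinomialSeries β) =
      lam ^ j * Ring.multichoose (j * α + β) l := by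
  rw [mul_pow, mul_assoc, ← negBinomialSeries_natCast_mul, ← negBinomialSeries_add, ← map_pow,
    coeff_C_mul, coeff_negBinomialSeries]

/-- Compare coefficients of `x ^ i` in
`(1 - (1 - x)) ^ n (1 - x) ^ (-r) = x ^ n (1 - x) ^ (-r)`. -/
lemma sum_neg_one_pow_mul_choose_mul_multichoose_sub (n i : ℕ) (r : R) :
    ∑ j ∈ range (n + 1), (-1) ^ j * (n.choose j : R) * Ring.multichoose (r - j) i =
      if n ≤ i then Ring.multichoose r (i - n) else 0 := by
  have series_eq : ∑ j ∈ range (n + 1), ((-1) ^ j * (n.choose j : R)) • negBinomialSeries (r - j) =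
      X ^ n * negBinomialSeries r := by
    rw [← sub_sub_cancel 1 (X : R⟦X⟧), one_sub_pow_eq_sum (R := R), sum_mul]
    refine sum_congr rfl fun j _ ↦ ?_
    rw [smul_mul_assoc, ← negBinomialSeries_neg_natCast, ← negBinomialSeries_add, neg_add_eq_sub]
  simpa only [map_sum, map_smul, smul_eq_mul, coeff_negBinomialSeries, coeff_X_pow_mul'] using
    congrArg (coeff i) series_eq

end Multichoose

section GeneratingSeries

variable {R : Type*} [CommSemiring R]

/-- The generating series `∑_l f(a + l + 1) X ^ l` of the restriction of `f` to `ℕ_{a+1}`. -/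
noncomputable def genSeries (a : ℤ) : (ℤ → R) →ₗ[R] R⟦X⟧ where
  toFun f := PowerSeries.mk fun l ↦ f (a + l + 1)
  map_add' _ _ := rfl
  map_smul' _ _ := rfl

lemma coeff_genSeries (a : ℤ) (f : ℤ → R) (l : ℕ) : coeff l (genSeries a f) = f (a + l + 1) :=
  coeff_mk l fun l : ℕ ↦ f (a + l + 1)

lemma genSeries_inj {a : ℤ} {f g : ℤ → R} :
    genSeries a f = genSeries a g ↔ ∀ k, a + 1 ≤ k → f k = g k := by
  simp only [PowerSeries.ext_iff, coeff_genSeries]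
  refine ⟨fun h k hk ↦ ?_, fun h l ↦ h _ (by lia)⟩
  obtain ⟨l, rfl⟩ : ∃ l : ℕ, k = a + l + 1 := ⟨(k - a - 1).toNat, by lia⟩
  exact h l

lemma genSeries_shift {a : ℤ} {f : ℤ → R} (hf : ∀ k ≤ a, f k = 0) (j : ℕ) :
    genSeries a (fun k ↦ f (k - j)) = X ^ j * genSeries a f := by
  ext l
  rw [coeff_X_pow_mul']
  split_ifs with h
  · rw [coeff_genSeries, coeff_genSeries, Nat.cast_sub h]
    congr 1
    ring
  · rw [coeff_genSeries, hf _ (by lia)]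

end GeneratingSeries

section NablaOperators

lemma bdiff_sub (n : ℕ) (f g : ℤ → ℝ) (k : ℤ) : bdiff n (f - g) k = bdiff n f k - bdiff n g k := by
  simp only [bdiff, Pi.sub_apply, mul_sub, sum_sub_distrib]

lemma genSeries_bdiff {a : ℤ} {f : ℤ → ℝ} (hf : ∀ k ≤ a, f k = 0) (n : ℕ) :
    genSeries a (bdiff n f) = negBinomialSeries (-n : ℝ) * genSeries a f := by
  have bdiff_eq : bdiff n f =
      ∑ j ∈ range (n + 1), ((-1 : ℝ) ^ j * n.choose j) • fun k ↦ f (k - j) := by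
    ext k
    simp only [bdiff, Finset.sum_apply, Pi.smul_apply, smul_eq_mul]
  rw [bdiff_eq, map_sum, negBinomialSeries_neg_natCast, one_sub_pow_eq_sum (R := ℝ), sum_mul]
  refine sum_congr rfl fun j _ ↦ ?_
  rw [map_smul, genSeries_shift hf, smul_mul_assoc]

lemma genSeries_nsum {γ : ℝ} (hγ : 0 < γ) (a : ℤ) (f : ℤ → ℝ) :
    genSeries a (nsum a γ f) = negBinomialSeries γ * genSeries a f := by
  ext l
  rw [coeff_genSeries, nsum, coeff_mul, Nat.sum_antidiagonal_eq_sum_range_succ_mk,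
    show (a + l + 1 - a).toNat = l + 1 by lia]
  refine sum_congr rfl fun j hj ↦ ?_
  rw [coeff_negBinomialSeries, multichoose_eq_Gamma_div hγ, coeff_genSeries,
    Nat.cast_sub (mem_range_succ_iff.1 hj)]
  congr 2
  ring

lemma genSeries_caputo {α : ℝ} {n : ℕ} (hα : α < n) {a : ℤ} {f p : ℤ → ℝ}
    (hfp : ∀ k ≤ a, f k = p k) (hp : ∀ k, bdiff n p k = 0) :
    genSeries a (caputo a α n f) =
      negBinomialSeries (-α) * (genSeries a f - genSeries a p) := by
  have bdiff_eq : bdiff n f = bdiff n (f - p) := by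
    ext k
    rw [bdiff_sub, hp, sub_zero]
  have vanish : ∀ k ≤ a, (f - p) k = 0 := fun k hk ↦ sub_eq_zero.2 (hfp k hk)
  calc genSeries a (caputo a α n f)
      = negBinomialSeries (n - α) * genSeries a (bdiff n f) := genSeries_nsum (sub_pos.2 hα) a _
    _ = negBinomialSeries (n - α + -n) * genSeries a (f - p) := by
      rw [bdiff_eq, genSeries_bdiff vanish, ← mul_assoc, ← negBinomialSeries_add]
    _ = negBinomialSeries (-α) * (genSeries a f - genSeries a p) := by
      rw [map_sub, show (n : ℝ) - α + -n = -α by ring]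

lemma caputo_eq_mul_of_genSeries {α lam : ℝ} {n : ℕ} (hα : α < n) {a : ℤ} {f p : ℤ → ℝ}
    (hfp : ∀ k ≤ a, f k = p k) (hp : ∀ k, bdiff n p k = 0)
    (h : (1 - C lam * negBinomialSeries α) * genSeries a f = genSeries a p) :
    ∀ k, a + 1 ≤ k → caputo a α n f k = lam * f k := by
  suffices genSeries a (caputo a α n f) = genSeries a (lam • f) from genSeries_inj.1 this
  have inverse : negBinomialSeries (-α) * negBinomialSeries α = 1 := by
    rw [← negBinomialSeries_add, neg_add_cancel, negBinomialSeries_zero]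
  rw [genSeries_caputo hα hfp hp, ← h, map_smul, smul_eq_C_mul]
  linear_combination C lam * genSeries a f * inverse

end NablaOperators

section MittagLeffler

open scoped PowerSeries.WithPiTopology

lemma summable_pow_of_norm_constantCoeff_lt_one {R : Type*} [NormedCommRing R] [CompleteSpace R]
    {F : R⟦X⟧} (hF : ‖constantCoeff F‖ < 1) : Summable fun j : ℕ ↦ F ^ j := by
  set c := constantCoeff F with hc
  obtain ⟨G, hG⟩ : X ∣ F - C c := by
    rw [X_dvd_iff, map_sub, constantCoeff_C, hc, sub_self]
  have coeff_pow (l j : ℕ) : coeff l (F ^ j) =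
      ∑ i ∈ range (l + 1), coeff l ((X * G) ^ i) * (j.choose i * c ^ (j - i)) := by
    have vanish_of_l : ∀ i ≥ l + 1, coeff l ((X * G) ^ i) * (j.choose i * c ^ (j - i)) = 0 :=
      fun i hi ↦ by rw [mul_pow, coeff_X_pow_mul', if_neg (by lia), zero_mul]
    have vanish_of_j : ∀ i ≥ j + 1, coeff l ((X * G) ^ i) * (j.choose i * c ^ (j - i)) = 0 :=
      fun i hi ↦ by rw [Nat.choose_eq_zero_of_lt hi, Nat.cast_zero, zero_mul, mul_zero]
    rw [← eventually_constant_sum vanish_of_l (n := l + j + 1) (by lia),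
      eventually_constant_sum vanish_of_j (by lia), ← sub_add_cancel F (C c), hG, add_pow, map_sum]
    refine sum_congr rfl fun i _ ↦ ?_
    rw [mul_assoc, ← map_pow, ← map_natCast C, ← map_mul, coeff_mul_C, mul_comm (c ^ _)]
  refine (WithPiTopology.summable_iff_summable_coeff _).2 fun l ↦ ?_
  simp only [coeff_pow]
  refine summable_sum fun i _ ↦ Summable.mul_left _ ((summable_nat_add_iff i).1 ?_)
  simpa only [Nat.add_sub_cancel] using summable_choose_mul_geometric_of_norm_lt_one i hF

lemma discML_eq_tsum_multichoose {α β : ℝ} (hα : 0 ≤ α) (hβ : 0 < β) (lam : ℝ) (a : ℤ) (l : ℕ) :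
    discML α β lam (a + l + 1) a = ∑' j : ℕ, lam ^ j * Ring.multichoose (j * α + β) l := by
  refine tsum_congr fun j ↦ ?_
  rw [multichoose_eq_Gamma_div (by positivity), rise, mul_div_assoc, div_div,
    mul_comm (Real.Gamma _) (Real.Gamma _)]
  push_cast
  ring_nf

lemma one_sub_mul_genSeries_discML {α β lam : ℝ} (hα : 0 ≤ α) (hβ : 0 < β) (hlam : |lam| < 1)
    (a : ℤ) :
    (1 - C lam * negBinomialSeries α) * genSeries a (fun k ↦ discML α β lam k a) =
      negBinomialSeries β := by
  have summable_pow : Summable fun j : ℕ ↦ (C lam * negBinomialSeries α) ^ j := by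
    refine summable_pow_of_norm_constantCoeff_lt_one ?_
    rwa [map_mul, constantCoeff_C, ← coeff_zero_eq_constantCoeff_apply, coeff_negBinomialSeries,
      Ring.multichoose_zero_right, mul_one]
  have geometric : genSeries a (fun k ↦ discML α β lam k a) =
      (∑' j : ℕ, (C lam * negBinomialSeries α) ^ j) * negBinomialSeries β := by
    ext l
    rw [coeff_genSeries, discML_eq_tsum_multichoose hα hβ]
    simp only [← coeff_C_mul_negBinomialSeries_pow_mul]
    exact ((WithPiTopology.hasSum_iff_hasSum_coeff _).1
      (summable_pow.hasSum.mul_right (negBinomialSeries β)) l).tsum_eq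
  rw [geometric, ← mul_assoc, summable_pow.one_sub_mul_tsum_pow, one_mul]

end MittagLeffler

section InitialPolynomial

/-- The polynomial `∑_{κ<n} b_κ (k-a)^{\overline κ} / κ!` whose backward differences at `a` are
`b_0, …, b_{n-1}`. -/
noncomputable def initialPolynomial (a : ℤ) (n : ℕ) (b : ℕ → ℝ) (k : ℤ) : ℝ :=
  ∑ κ ∈ range n, b κ * Ring.multichoose ((k : ℝ) - a) κ

variable (a : ℤ) (n : ℕ) (b : ℕ → ℝ)

lemma bdiff_initialPolynomial (s : ℕ) (k : ℤ) :
    bdiff s (initialPolynomial a n b) k =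
      ∑ κ ∈ range n, b κ * if s ≤ κ then Ring.multichoose ((k : ℝ) - a) (κ - s) else 0 := by
  simp only [bdiff, initialPolynomial, ← sum_neg_one_pow_mul_choose_mul_multichoose_sub, mul_sum]
  rw [sum_comm]
  refine sum_congr rfl fun κ _ ↦ sum_congr rfl fun j _ ↦ ?_
  push_cast
  rw [sub_right_comm]
  ring

lemma bdiff_initialPolynomial_eq_zero (k : ℤ) : bdiff n (initialPolynomial a n b) k = 0 := by
  rw [bdiff_initialPolynomial]
  refine sum_eq_zero fun κ hκ ↦ ?_
  rw [if_neg (mem_range.1 hκ).not_ge, mul_zero]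

lemma bdiff_initialPolynomial_self {κ : ℕ} (hκ : κ < n) :
    bdiff κ (initialPolynomial a n b) a = b κ := by
  rw [bdiff_initialPolynomial, sub_self, sum_eq_single_of_mem κ (mem_range.2 hκ)]
  · rw [if_pos le_rfl, Nat.sub_self, Ring.multichoose_zero_right, mul_one]
  · intro i _ hi
    split_ifs with h
    · obtain ⟨m, rfl⟩ := Nat.exists_eq_add_of_lt (h.lt_of_ne' hi)
      rw [add_assoc, Nat.add_sub_cancel_left, Ring.multichoose_zero_succ, mul_zero]
    · rw [mul_zero]

lemma genSeries_initialPolynomial :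
    genSeries a (initialPolynomial a n b) =
      ∑ κ ∈ range n, b κ • negBinomialSeries ((κ : ℝ) + 1) := by
  ext l
  rw [coeff_genSeries, initialPolynomial, map_sum]
  refine sum_congr rfl fun κ _ ↦ ?_
  rw [map_smul, coeff_negBinomialSeries, ← multichoose_natCast_add_one_comm, smul_eq_mul]
  push_cast
  rw [add_assoc, add_sub_cancel_left]

end InitialPolynomial

theorem zero_input_response_general (a : ℤ) (n : ℕ) (α : ℝ) (hα0 : 0 ≤ α) (hαn : α < n)
    (lam : ℝ) (hlam : |lam| < 1) (b : ℕ → ℝ) (y : ℤ → ℝ)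
    (hy1 : ∀ k : ℤ, a + 1 ≤ k →
      y k = ∑ κ ∈ range n, b κ * discML α ((κ : ℝ) + 1) lam k a)
    (hy2 : ∀ k : ℤ, k ≤ a →
      y k = ∑ κ ∈ range n, b κ * ((∏ i ∈ range κ, ((k : ℝ) - a + i)) / κ.factorial)) :
    (∀ κ < n, bdiff κ y a = b κ) ∧ ∀ k, a + 1 ≤ k → caputo a α n y k = lam * y k := by
  have y_eq_initialPolynomial : ∀ k ≤ a, y k = initialPolynomial a n b k := fun k hk ↦ by
    simp only [hy2 k hk, initialPolynomial, multichoose_eq_prod_div_factorial]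
  have genSeries_y : genSeries a y =
      ∑ κ ∈ range n, b κ • genSeries a (fun k ↦ discML α ((κ : ℝ) + 1) lam k a) := by
    simp only [← map_smul, ← map_sum]
    refine genSeries_inj.2 fun k hk ↦ ?_
    simp only [hy1 k hk, Finset.sum_apply, Pi.smul_apply, smul_eq_mul]
  refine ⟨fun κ hκ ↦ ?_, caputo_eq_mul_of_genSeries hαn y_eq_initialPolynomial
    (bdiff_initialPolynomial_eq_zero a n b) ?_⟩
  · rw [← bdiff_initialPolynomial_self a n b hκ]
    exact sum_congr rfl fun j _ ↦ by rw [y_eq_initialPolynomial _ (by lia)]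
  · rw [genSeries_y, genSeries_initialPolynomial, mul_sum]
    exact sum_congr rfl fun κ _ ↦ by
      rw [mul_smul_comm, one_sub_mul_genSeries_discML hα0 (by positivity) hlam]

/-- zero-input response: for `n-1 < α < n`, `|λ| < 1` and reals
`b₀,…,b_{n-1}`, the function `y` given by
`y(k) = ∑_{κ=0}^{n-1} b_κ F_{α,κ+1}(λ,k,a)` for `k ≥ a+1` and
`y(k) = ∑_{κ=0}^{n-1} b_κ ∏_{i=0}^{κ-1}(k-a+i)/κ!` for `k ≤ a`
satisfies the initial conditions `∇^κ y(a) = b_κ` (`κ = 0,…,n-1`) and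
`ₐ∇ₖ^α y(k) = λ y(k)` for every `k ∈ ℕ_{a+1}`. -/
theorem zero_input_response (a : ℤ) (n : ℕ) (hn : 0 < n) (α : ℝ)
    (hα1 : (n : ℝ) - 1 < α) (hα2 : α < n) (lam : ℝ) (hlam : |lam| < 1)
    (b : ℕ → ℝ) (y : ℤ → ℝ)
    (hy1 : ∀ k : ℤ, a + 1 ≤ k →
      y k = ∑ κ ∈ Finset.range n, b κ * discML α ((κ : ℝ) + 1) lam k a)
    (hy2 : ∀ k : ℤ, k ≤ a →
      y k = ∑ κ ∈ Finset.range n,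
        b κ * ((∏ i ∈ Finset.range κ, ((k : ℝ) - (a : ℝ) + (i : ℝ))) / (Nat.factorial κ : ℝ))) :
    (∀ κ : ℕ, κ < n → bdiff κ y a = b κ) ∧
    (∀ k : ℤ, a + 1 ≤ k → caputo a α n y k = lam * y k) :=
  zero_input_response_general a n α
    ((sub_nonneg.2 (Nat.one_le_cast.2 hn)).trans hα1.le) hα2 lam hlam b y hy1 hy2
end

section
/- Let a ∈ ℤ, let 1 < α < 2, and let λ be a real number with -1 < λ < 0. Then the function k ↦ F_{α,1}(λ,k,a) changes sign: it is not the case that F_{α,1}(λ,k,a) > 0 for all k ∈ ℕ_{a+1}; in fact there exists k ∈ ℕ_{a+1} with F_{α,1}(λ,k,a) < 0 (while F_{α,1}(λ,a+1,a) = 1/(1-λ) > 0). -/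
open Filter Finset Polynomial Ring
open scoped Nat Topology

theorem ascPochhammer_eval_eq_prod_range {S : Type*} [CommSemiring S] (n : ℕ) (x : S) :
    (ascPochhammer S n).eval x = ∏ j ∈ range n, (x + j) := by
  induction n with
  | zero => simp
  | succ n ih => rw [ascPochhammer_succ_eval, ih, prod_range_succ]

theorem multichoose_add {R : Type*} [Ring R] [BinomialRing R] {r s : R} (n : ℕ)
    (h : Commute r s) :
    multichoose (r + s) n = ∑ p ∈ antidiagonal n, multichoose r p.1 * multichoose s p.2 := by
  have hsign (x : R) (k : ℕ) : multichoose x k = Int.negOnePow k • choose (-x) k := by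
    rw [choose_neg', smul_smul, Int.units_mul_self, one_smul]
  rw [hsign, neg_add, add_choose_eq n h.neg_left.neg_right, smul_sum]
  refine sum_congr rfl fun p hp => ?_
  rw [hsign r, hsign s, smul_mul_smul_comm, ← Int.negOnePow_add, ← mem_antidiagonal.mp hp,
    Nat.cast_add]

theorem multichoose_eq_eval_ascPochhammer_div {K : Type*} [Field K] [CharZero K]
    (x : K) (n : ℕ) : multichoose x n = (ascPochhammer K n).eval x / n ! := by
  rw [eq_div_iff (by exact_mod_cast n.factorial_ne_zero), mul_comm, ← nsmul_eq_mul,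
    factorial_nsmul_multichoose_eq_ascPochhammer, ascPochhammer_smeval_eq_eval]

theorem multichoose_pos {K : Type*} [Field K] [LinearOrder K] [IsStrictOrderedRing K] {x : K}
    (hx : 0 < x) (n : ℕ) : 0 < multichoose x n := by
  rw [multichoose_eq_eval_ascPochhammer_div]
  have := ascPochhammer_pos n x hx
  positivity

theorem GammaSeq_eq_rpow_div_multichoose (x : ℝ) (n : ℕ) :
    Real.GammaSeq x n = (n : ℝ) ^ x / ((n + 1) * multichoose x (n + 1)) := by
  rw [Real.GammaSeq, multichoose_eq_eval_ascPochhammer_div, ascPochhammer_eval_eq_prod_range,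
    Nat.factorial_succ]
  push_cast
  field_simp

theorem tendsto_multichoose_div_multichoose_atTop {x y : ℝ} (hx : 0 < x) (hxy : x < y) :
    Tendsto (fun n => multichoose y n / multichoose x n) atTop atTop := by
  rw [← tendsto_add_atTop_iff_nat 1]
  have hGamma : Tendsto (fun n => Real.GammaSeq x n / Real.GammaSeq y n) atTop
      (𝓝 (Real.Gamma x / Real.Gamma y)) :=
    (Real.GammaSeq_tendsto_Gamma x).div (Real.GammaSeq_tendsto_Gamma y)
      (Real.Gamma_pos_of_pos (hx.trans hxy)).ne'
  have hpos : 0 < Real.Gamma x / Real.Gamma y :=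
    div_pos (Real.Gamma_pos_of_pos hx) (Real.Gamma_pos_of_pos (hx.trans hxy))
  have hrpow : Tendsto (fun n : ℕ => (n : ℝ) ^ (y - x)) atTop atTop :=
    (tendsto_rpow_atTop (sub_pos.mpr hxy)).comp tendsto_natCast_atTop_atTop
  refine (hrpow.atTop_mul_pos hpos hGamma).congr' ?_
  filter_upwards [eventually_gt_atTop 0] with n hn
  have hn' : (0 : ℝ) < n := Nat.cast_pos.mpr hn
  have hmx := (multichoose_pos hx (n + 1)).ne'
  have hmy := (multichoose_pos (hx.trans hxy) (n + 1)).ne'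
  rw [GammaSeq_eq_rpow_div_multichoose, GammaSeq_eq_rpow_div_multichoose,
    Real.rpow_sub hn']
  field_simp

theorem Gamma_add_natCast_div_Gamma {x : ℝ} (hx : ∀ k : ℕ, x ≠ -k) (n : ℕ) :
    Real.Gamma (x + n) / Real.Gamma x = (ascPochhammer ℝ n).eval x := by
  have h := Complex.Gamma_add_nat_div_Gamma_eq (n := n) (x : ℂ) fun k => mod_cast hx k
  rw [ascPochhammer_eval_eq_prod_range] at h ⊢
  rw [← Complex.ofReal_inj]
  simpa [← Complex.Gamma_ofReal] using h

theorem rise_div_Gamma {x : ℝ} (hx : ∀ k : ℕ, x ≠ -k) (n : ℕ) :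
    rise (n + 1) (x - 1) / Real.Gamma x = multichoose x n := by
  have harg : ((n + 1 : ℤ) : ℝ) + (x - 1) = x + n := by push_cast; ring
  rw [multichoose_eq_eval_ascPochhammer_div, ← Gamma_add_natCast_div_Gamma hx, rise, harg,
    div_right_comm]
  push_cast
  rw [Real.Gamma_nat_eq_factorial]

theorem summable_pow_mul_eval {R : Type*} [NormedCommRing R] [HasSummableGeomSeries R]
    (P : R[X]) {r : R} (hr : ‖r‖ < 1) : Summable fun j : ℕ => r ^ j * P.eval (j : R) := by
  simp_rw [eval_eq_sum_range, mul_sum]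
  refine summable_sum fun i _ => ?_
  refine ((summable_pow_mul_geometric_of_norm_lt_one i hr).mul_left (P.coeff i)).congr
    fun j => ?_
  ring

theorem summable_pow_mul_multichoose {𝕜 : Type*} [NormedField 𝕜] [CompleteSpace 𝕜] [CharZero 𝕜]
    (x y : 𝕜) {r : 𝕜} (hr : ‖r‖ < 1) (n : ℕ) :
    Summable fun j : ℕ => r ^ j * multichoose (j * x + y) n := by
  have h := summable_pow_mul_eval ((ascPochhammer 𝕜 n).comp (X * C x + C y)) hr
  refine (h.div_const (n ! : 𝕜)).congr fun j => ?_
  simp only [multichoose_eq_eval_ascPochhammer_div, eval_comp, eval_add, eval_mul, eval_X,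
    eval_C, mul_div_assoc]

section DiscML

variable {α β lam : ℝ}

theorem hasSum_discML (hα : 0 ≤ α) (hβ : 0 < β) (hlam : |lam| < 1) (a : ℤ) (n : ℕ) :
    HasSum (fun j : ℕ => lam ^ j * multichoose (j * α + β) n)
      (discML α β lam (a + 1 + n) a) := by
  have hterm (j : ℕ) :
      lam ^ j * rise (a + 1 + n - a) (j * α + β - 1) / Real.Gamma (j * α + β) =
        lam ^ j * multichoose (j * α + β) n := by
    have hk : a + 1 + n - a = n + 1 := by ring
    have hpos : 0 < j * α + β := by positivity
    have hne (i : ℕ) : j * α + β ≠ -i := ((neg_nonpos.mpr i.cast_nonneg).trans_lt hpos).ne'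
    rw [hk, mul_div_assoc, rise_div_Gamma hne]
  rw [discML, tsum_congr hterm]
  exact (summable_pow_mul_multichoose α β hlam n).hasSum

theorem discML_add_one_self (hα : 0 ≤ α) (hβ : 0 < β) (hlam : |lam| < 1) (a : ℤ) :
    discML α β lam (a + 1) a = 1 / (1 - lam) := by
  have h := hasSum_discML hα hβ hlam a 0
  simp only [multichoose_zero_right, mul_one, Nat.cast_zero, add_zero] at h
  rw [one_div]
  exact h.unique (hasSum_geometric_of_abs_lt_one hlam)

theorem discML_add_one_add (hα : 0 ≤ α) (hβ : 0 < β) (hlam : |lam| < 1) (a : ℤ) (n : ℕ) :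
    discML α β lam (a + 1 + n) a = multichoose β n + lam *
      ∑ p ∈ antidiagonal n, multichoose α p.1 * discML α β lam (a + 1 + p.2) a := by
  have hconv : HasSum
      (fun j : ℕ => lam * ∑ p ∈ antidiagonal n,
        multichoose α p.1 * (lam ^ j * multichoose (j * α + β) p.2))
      (lam * ∑ p ∈ antidiagonal n, multichoose α p.1 * discML α β lam (a + 1 + p.2) a) :=
    (hasSum_sum fun p _ => (hasSum_discML hα hβ hlam a p.2).mul_left _).mul_left lam
  have hshift (j : ℕ) : lam ^ (j + 1) * multichoose ((j + 1 : ℕ) * α + β) n =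
      lam * ∑ p ∈ antidiagonal n,
        multichoose α p.1 * (lam ^ j * multichoose (j * α + β) p.2) := by
    have harg : ((j + 1 : ℕ) : ℝ) * α + β = α + (j * α + β) := by push_cast; ring
    rw [harg, multichoose_add n (Commute.all _ _), mul_sum, mul_sum]
    exact sum_congr rfl fun p _ => by ring
  have htail := (hasSum_nat_add_iff' 1).mpr (hasSum_discML hα hβ hlam a n)
  simp only [hshift, sum_range_one, pow_zero, one_mul, Nat.cast_zero, zero_mul, zero_add]
    at htail
  linarith [htail.unique hconv]

theorem discML_add_one_self_pos (hα : 0 ≤ α) (hβ : 0 < β) (hlam : |lam| < 1) (a : ℤ) :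
    0 < discML α β lam (a + 1) a := by
  rw [discML_add_one_self hα hβ hlam]
  exact one_div_pos.mpr (sub_pos.mpr (abs_lt.mp hlam).2)

theorem discML_le_of_nonneg (hα : 0 < α) (hβ : 0 < β) (hlam : |lam| < 1) (hlam_nonpos : lam ≤ 0)
    {a : ℤ} (hnonneg : ∀ m : ℕ, 0 ≤ discML α β lam (a + 1 + m) a) (n : ℕ) :
    discML α β lam (a + 1 + n) a ≤
      multichoose β n + lam * (multichoose α n * discML α β lam (a + 1) a) := by
  have hsingle : multichoose α n * discML α β lam (a + 1) a ≤
      ∑ p ∈ antidiagonal n, multichoose α p.1 * discML α β lam (a + 1 + p.2) a := by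
    have h := single_le_sum
      (f := fun p : ℕ × ℕ => multichoose α p.1 * discML α β lam (a + 1 + p.2) a)
      (fun p _ => mul_nonneg (multichoose_pos hα p.1).le (hnonneg p.2))
      (show (n, 0) ∈ antidiagonal n by simp)
    simpa using h
  rw [discML_add_one_add hα.le hβ hlam]
  exact add_le_add_right (mul_le_mul_of_nonpos_left hsingle hlam_nonpos) _

theorem exists_discML_neg (a : ℤ) (hβ : 0 < β) (hβα : β < α) (hlam : |lam| < 1)
    (hlam_neg : lam < 0) : ∃ n : ℕ, discML α β lam (a + 1 + n) a < 0 := by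
  by_contra! hnonneg
  have hα : 0 < α := hβ.trans hβα
  have hcoeff : 0 < -lam * discML α β lam (a + 1) a :=
    mul_pos (neg_pos.mpr hlam_neg) (discML_add_one_self_pos hα.le hβ hlam a)
  obtain ⟨n, hn⟩ := ((tendsto_multichoose_div_multichoose_atTop hβ hβα).eventually_gt_atTop
    (1 / (-lam * discML α β lam (a + 1) a))).exists
  rw [div_lt_div_iff₀ hcoeff (multichoose_pos hβ n)] at hn
  linarith [hnonneg n, discML_le_of_nonneg hα hβ hlam hlam_neg.le hnonneg n]

end DiscML

theorem discML_sign_change_general (a : ℤ) {α β : ℝ} (hβ : 0 < β) (hβα : β < α)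
    {lam : ℝ} (hlam0 : -1 < lam) (hlam1 : lam < 0) :
    ¬ (∀ k : ℤ, a + 1 ≤ k → 0 < discML α β lam k a) ∧
    (∃ k : ℤ, a + 1 ≤ k ∧ discML α β lam k a < 0) ∧
    discML α β lam (a + 1) a = 1 / (1 - lam) ∧
    0 < discML α β lam (a + 1) a := by
  have hα : 0 ≤ α := (hβ.trans hβα).le
  have hlam : |lam| < 1 := abs_lt.mpr ⟨hlam0, hlam1.trans one_pos⟩
  obtain ⟨n, hn⟩ := exists_discML_neg a hβ hβα hlam hlam1
  have hk : a + 1 ≤ a + 1 + n := by simp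
  exact ⟨fun hpos => lt_asymm hn (hpos _ hk), ⟨_, hk, hn⟩,
    discML_add_one_self hα hβ hlam a, discML_add_one_self_pos hα hβ hlam a⟩

/-- for `1 < α < 2` and `-1 < λ < 0`, the function
`k ↦ F_{α,1}(λ,k,a)` changes sign on `ℕ_{a+1}`: it is not always positive, and
indeed it takes a negative value, while `F_{α,1}(λ,a+1,a) = 1/(1-λ) > 0`. -/
theorem discML_sign_change (a : ℤ) (α : ℝ) (hα0 : 1 < α) (hα1 : α < 2)
    (lam : ℝ) (hlam0 : -1 < lam) (hlam1 : lam < 0) :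
    ¬ (∀ k : ℤ, a + 1 ≤ k → 0 < discML α 1 lam k a) ∧
    (∃ k : ℤ, a + 1 ≤ k ∧ discML α 1 lam k a < 0) ∧
    discML α 1 lam (a + 1) a = 1 / (1 - lam) ∧
    0 < discML α 1 lam (a + 1) a :=
  discML_sign_change_general a one_pos hα0 hlam0 hlam1
end
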